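/- arXiv:2407.14647 — 8 statements merged into one kernel-verified Lean document; each statement's English description precedes it below -/
import Mathlib

section
/- Let I be a finite type and ξ a square matrix of type (I,I) with entries in a commutative ring R. Then det ξ = ∑_{σ ∈ Perm(I)} (-1)^{|I| + c(σ)} · ∏_{i ∈ I} ξ(i, σ(i)), where c(σ) denotes the number of orbits of σ on I (cycles of σ, counting fixed points as cycles of length one). -/
attribute [local instance] Classical.propDecidable

/-- The number of orbits of a permutation `σ` on a finite type `I`, i.e. the number of
cycles in the cycle decomposition of `σ`, counting fixed points as cycles of length one. -/
noncomputable def orbitCount {I : Type*} [Fintype I] (σ : Equiv.Perm I) : ℕ :=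
  Multiset.card σ.cycleType + (Fintype.card I - σ.support.card)

/-- The sign of a permutation is the parity of the number of points plus the number of orbits. -/
theorem sign_eq_neg_one_pow_card_add_orbitCount {I : Type*} [Fintype I] (σ : Equiv.Perm I) :
    Equiv.Perm.sign σ = (-1) ^ (Fintype.card I + orbitCount σ) := by
  have hle : σ.support.card ≤ Fintype.card I := Finset.card_le_univ _
  rw [Equiv.Perm.sign_of_cycleType, Equiv.Perm.sum_cycleType, neg_one_pow_congr]
  unfold orbitCount
  grind

theorem stmt0 {I R : Type*} [Fintype I] [CommRing R] (ξ : Matrix I I R) :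
    ξ.det = ∑ σ : Equiv.Perm I,
      (-1 : R) ^ (Fintype.card I + orbitCount σ) * ∏ i : I, ξ i (σ i) := by
  rw [← Matrix.det_transpose, Matrix.det_apply']
  simp [sign_eq_neg_one_pow_card_add_orbitCount]
end

section
/- Let I be a finite type and ξ a square matrix of type (I,I) with entries in a commutative ring R. For all i, j ∈ I, the (i,j)-entry of the adjugate matrix of ξ (i.e. the cofactor κ_{j,i}) equals ∑_{τ ∈ Perm(I), τ(j) = i} (-1)^{|I| + c(τ)} · ∏_{v ∈ I, v ≠ j} ξ(v, τ(v)), where c(τ) is the number of orbits of τ on I (cycles including fixed points). -/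
attribute [local instance] Classical.propDecidable

theorem stmt1 {I R : Type*} [Fintype I] [CommRing R] (ξ : Matrix I I R) (i j : I) :
    ξ.adjugate i j = ∑ τ ∈ Finset.univ.filter (fun τ : Equiv.Perm I => τ j = i),
      (-1 : R) ^ (Fintype.card I + orbitCount τ) *
        ∏ v ∈ Finset.univ.erase j, ξ v (τ v) := by
  rw [Matrix.adjugate_apply, ← Matrix.det_transpose, Matrix.det_apply', Finset.sum_filter]
  refine Finset.sum_congr rfl fun τ _ => ?_
  have hprod : ∏ v ∈ Finset.univ.erase j, (ξ.updateRow j (Pi.single i 1)).transpose (τ v) v =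
      ∏ v ∈ Finset.univ.erase j, ξ v (τ v) :=
    Finset.prod_congr rfl fun v hv => by
      rw [Matrix.transpose_apply, Matrix.updateRow_ne (Finset.ne_of_mem_erase hv)]
  rw [← Finset.mul_prod_erase _ _ (Finset.mem_univ j), hprod, Matrix.transpose_apply,
    Matrix.updateRow_self, Pi.single_apply, sign_eq_neg_one_pow_card_add_orbitCount]
  split_ifs <;> simp
end

section
/- Let I be a finite type and ξ an invertible square matrix of type (I,I) with entries in a field K. Then for all i, j ∈ I, the product of ξ⁻¹(i,j) with ∑_{σ ∈ Perm(I)} (-1)^{c(σ)} ∏_{v ∈ I} ξ(v, σ(v)) equals ∑_{τ ∈ Perm(I), τ(j) = i} (-1)^{c(τ)} ∏_{v ∈ I, v ≠ j} ξ(v, τ(v)); that is, ξ⁻¹(i,j) is the quotient of the signed weighted sum over connections of i to j by the signed weighted sum over linear subdigraphs of D(ξ). -/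
attribute [local instance] Classical.propDecidable

theorem neg_one_pow_orbitCount {I R : Type*} [Fintype I] [CommRing R] (σ : Equiv.Perm I) :
    (-1 : R) ^ orbitCount σ = (-1) ^ Fintype.card I * ((Equiv.Perm.sign σ : ℤ) : R) := by
  have hle : σ.support.card ≤ Fintype.card I := Finset.card_le_univ _
  rw [Equiv.Perm.sign_of_cycleType, Equiv.Perm.sum_cycleType, orbitCount]
  obtain ⟨k, hk⟩ := Nat.exists_eq_add_of_le hle
  rw [hk, Nat.add_sub_cancel_left]
  push_cast
  have hsq : (-1 : R) ^ σ.support.card * (-1) ^ σ.support.card = 1 := by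
    rw [← mul_pow]; simp
  linear_combination (-(-1 : R) ^ Multiset.card σ.cycleType * (-1) ^ k) * hsq

theorem sum_neg_one_pow_orbitCount_mul_prod {I R : Type*} [Fintype I] [CommRing R]
    (A : Matrix I I R) :
    ∑ σ : Equiv.Perm I, (-1 : R) ^ orbitCount σ * ∏ v, A v (σ v) =
      (-1) ^ Fintype.card I * A.det := by
  rw [← Matrix.det_transpose, Matrix.det_apply', Finset.mul_sum]
  simp only [neg_one_pow_orbitCount, Matrix.transpose_apply, mul_assoc]

theorem prod_updateRow_single {I R : Type*} [Fintype I] [CommRing R]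
    (A : Matrix I I R) (i j : I) (τ : Equiv.Perm I) :
    ∏ v, A.updateRow j (Pi.single i 1) v (τ v) =
      if τ j = i then ∏ v ∈ Finset.univ.erase j, A v (τ v) else 0 := by
  rw [← Finset.mul_prod_erase _ _ (Finset.mem_univ j), Matrix.updateRow_self, Pi.single_apply,
    ite_mul, one_mul, zero_mul]
  congr 1
  refine Finset.prod_congr rfl fun v hv => ?_
  rw [Matrix.updateRow_ne (Finset.ne_of_mem_erase hv)]

theorem stmt3 {I K : Type*} [Fintype I] [Field K] (ξ : Matrix I I K)
    (hξ : IsUnit ξ.det) (i j : I) :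
    ξ⁻¹ i j * (∑ σ : Equiv.Perm I, (-1 : K) ^ (orbitCount σ) * ∏ v : I, ξ v (σ v)) =
      ∑ τ ∈ Finset.univ.filter (fun τ : Equiv.Perm I => τ j = i),
        (-1 : K) ^ (orbitCount τ) * ∏ v ∈ Finset.univ.erase j, ξ v (τ v) := by
  have hadj := sum_neg_one_pow_orbitCount_mul_prod (ξ.updateRow j (Pi.single i 1))
  simp only [prod_updateRow_single, mul_ite, mul_zero] at hadj
  rw [Finset.sum_filter, hadj, ← Matrix.adjugate_apply, sum_neg_one_pow_orbitCount_mul_prod,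
    Matrix.inv_def, Matrix.smul_apply, smul_eq_mul, Ring.inverse_eq_inv']
  have hdet : ξ.det⁻¹ * ξ.det = 1 := inv_mul_cancel₀ hξ.ne_zero
  linear_combination (ξ.adjugate i j * (-1) ^ Fintype.card I) * hdet
end

section
/- Let 𝒜 be a finite category whose zeta matrix ζ over ℚ, defined by ζ(a,b) = card Hom(a,b), is invertible. Then for any objects a, b of 𝒜, if Hom(a,b) is empty (equivalently ζ(a,b) = 0), then ζ⁻¹(a,b) = 0. -/
open CategoryTheory

attribute [local instance] Classical.propDecidable

/-- The zeta matrix of a finite category: `ζ(a,b) = card Hom(a,b)`, over `ℚ`. -/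
noncomputable def zeta (𝒜 : Type*) [Category 𝒜] [∀ a b : 𝒜, Fintype (a ⟶ b)] :
    Matrix 𝒜 𝒜 ℚ :=
  Matrix.of fun a b => (Fintype.card (a ⟶ b) : ℚ)

/-- The zeta matrix is block triangular with respect to reachability from a fixed object. -/
theorem zeta_blockTriangular {𝒜 : Type*} [Category 𝒜] [∀ a b : 𝒜, Fintype (a ⟶ b)] (a : 𝒜) :
    (zeta 𝒜).BlockTriangular fun x => if Nonempty (a ⟶ x) then 1 else 0 := by
  intro x y hxy
  have hx : Nonempty (a ⟶ x) := by
    by_contra h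
    simp [h] at hxy
  have hy : ¬ Nonempty (a ⟶ y) := fun h => by simp [h, hx] at hxy
  have : IsEmpty (x ⟶ y) := ⟨fun g => hy (hx.map (· ≫ g))⟩
  simp [zeta]

theorem stmt5 {𝒜 : Type*} [Category 𝒜] [Fintype 𝒜] [∀ a b : 𝒜, Fintype (a ⟶ b)]
    (hζ : IsUnit (zeta 𝒜).det) (a b : 𝒜) (hab : IsEmpty (a ⟶ b)) :
    (zeta 𝒜)⁻¹ a b = 0 := by
  have := (zeta 𝒜).invertibleOfIsUnitDet hζ
  refine Matrix.blockTriangular_inv_of_blockTriangular (zeta_blockTriangular a) ?_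
  have ha : Nonempty (a ⟶ a) := ⟨𝟙 a⟩
  simp [hab, ha]
end

section
/- Let 𝒜 be a finite category in which every idempotent endomorphism is an identity. Then every circuit in 𝒜 consists entirely of isomorphisms: for any k ≥ 1, any objects c_0, c_1, …, c_k with c_k = c_0, and any morphisms f_i : c_{i-1} ⟶ c_i for i = 1, …, k, each f_i is an isomorphism. -/
open CategoryTheory

/-- Some positive power of an element of a finite monoid is idempotent. -/
theorem exists_pow_succ_isIdempotentElem {M : Type*} [Monoid M] [Finite M] (x : M) :
    ∃ n : ℕ, IsIdempotentElem (x ^ (n + 1)) := by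
  obtain ⟨m, n, hmn, h⟩ : ∃ m n : ℕ, m < n ∧ x ^ m = x ^ n := by
    obtain ⟨m, n, hne, h⟩ := Finite.exists_ne_map_eq_of_infinite (fun n : ℕ => x ^ n)
    rcases lt_or_gt_of_ne hne with hlt | hlt
    · exact ⟨m, n, hlt, h⟩
    · exact ⟨n, m, hlt, h.symm⟩
  obtain ⟨d, rfl⟩ := Nat.exists_eq_add_of_lt hmn
  have period (j : ℕ) : x ^ (m + j * (d + 1)) = x ^ m := by
    induction j with
    | zero => simp
    | succ j ih =>
      rw [show m + (j + 1) * (d + 1) = (m + d + 1) + j * (d + 1) by ring, pow_add, ← h,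
        ← pow_add, ih]
  refine ⟨m * (d + 1) + d, ?_⟩
  rw [IsIdempotentElem, ← pow_add,
    show m * (d + 1) + d + 1 + (m * (d + 1) + d + 1) =
      m + (m + 1) * (d + 1) + (m * d + d + 1) by ring,
    pow_add, period, ← pow_add]
  congr 1
  ring

/-- If an object has finitely many endomorphisms and its only idempotent is the identity, then all
its endomorphisms are invertible. -/
theorem CategoryTheory.isIso_of_finite_end {C : Type*} [Category C] {a : C} [Finite (End a)]
    (hid : ∀ f : a ⟶ a, f ≫ f = f → f = 𝟙 a) (e : a ⟶ a) : IsIso e := by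
  obtain ⟨n, hn⟩ := exists_pow_succ_isIdempotentElem (M := End a) e
  have hpow : (End.of e) ^ (n + 1) = 1 := hid _ hn
  exact (isUnit_iff_isIso e).1 (IsUnit.of_pow_eq_one hpow n.succ_ne_zero)

/-- A morphism is invertible as soon as both its composites with some reverse morphism are. -/
theorem CategoryTheory.isIso_of_isIso_comp_comp {C : Type*} [Category C] {a b : C}
    (f : a ⟶ b) (g : b ⟶ a) [IsIso (f ≫ g)] [IsIso (g ≫ f)] : IsIso f := by
  have : IsSplitMono f := ⟨⟨⟨g ≫ inv (f ≫ g), by rw [← Category.assoc, IsIso.hom_inv_id]⟩⟩⟩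
  have : Epi f := epi_of_epi g f
  exact isIso_of_epi_of_isSplitMono f

/-- A chain of morphisms yields a morphism between any two of its objects in increasing order. -/
theorem CategoryTheory.nonempty_hom_of_chain {C : Type*} [Category C] {k : ℕ}
    (c : Fin (k + 1) → C) (f : ∀ i : Fin k, c i.castSucc ⟶ c i.succ) {i j : Fin (k + 1)}
    (hij : i ≤ j) : Nonempty (c i ⟶ c j) := by
  induction j using Fin.induction with
  | zero =>
    obtain rfl : i = 0 := le_antisymm hij (Fin.zero_le _)
    exact ⟨𝟙 _⟩
  | succ j ih =>
    rcases hij.eq_or_lt with rfl | hlt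
    · exact ⟨𝟙 _⟩
    · obtain ⟨g⟩ := ih (Fin.le_castSucc_iff.2 hlt)
      exact ⟨g ≫ f j⟩

theorem stmt7 {𝒜 : Type*} [Category 𝒜] [Fintype 𝒜] [∀ a b : 𝒜, Fintype (a ⟶ b)]
    (hid : ∀ (a : 𝒜) (f : a ⟶ a), f ≫ f = f → f = 𝟙 a)
    (k : ℕ) (hk : 1 ≤ k) (c : Fin (k + 1) → 𝒜) (hc : c (Fin.last k) = c 0)
    (f : ∀ i : Fin k, c i.castSucc ⟶ c i.succ) :
    ∀ i : Fin k, IsIso (f i) := by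
  intro i
  obtain ⟨p⟩ := nonempty_hom_of_chain c f (Fin.le_last i.succ)
  obtain ⟨q⟩ := nonempty_hom_of_chain c f (Fin.zero_le i.castSucc)
  have hfin (a : 𝒜) : Finite (End a) := inferInstanceAs (Finite (a ⟶ a))
  let g : c i.succ ⟶ c i.castSucc := p ≫ eqToHom hc ≫ q
  have : IsIso (f i ≫ g) := isIso_of_finite_end (hid _) _
  have : IsIso (g ≫ f i) := isIso_of_finite_end (hid _) _
  exact isIso_of_isIso_comp_comp (f i) g
end

section
/- Let P be a finite partially ordered set and let ζ : P × P → ℚ be defined by ζ(a,b) = 1 if a ≤ b and ζ(a,b) = 0 otherwise. Then ζ is invertible, and for all a, b ∈ P: ζ⁻¹(a,b) = ∑_{k=0}^{|P|-1} (-1)^k · N_k(a,b), where N_k(a,b) is the number of strictly increasing chains a = c_0 < c_1 < ⋯ < c_k = b in P (i.e. the number of strictly monotone maps c : Fin(k+1) → P with c(0) = a and c(k) = b). -/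
attribute [local instance] Classical.propDecidable

/-- The zeta matrix of a finite poset over `ℚ`: `ζ(a,b) = 1` if `a ≤ b`, else `0`. -/
noncomputable def zetaPoset (P : Type*) [Fintype P] [PartialOrder P] : Matrix P P ℚ :=
  Matrix.of fun a b => if a ≤ b then 1 else 0

/-- The strict order matrix of a finite poset over `ℚ`: entry `1` if `a < b`, else `0`. -/
noncomputable def strictZetaPoset (P : Type*) [Fintype P] [PartialOrder P] : Matrix P P ℚ :=
  Matrix.of fun a b => if a < b then 1 else 0

/-- The strictly increasing chains `a = c 0 < ⋯ < c k = b`. -/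
noncomputable def strictChains {P : Type*} [Fintype P] [PartialOrder P] (k : ℕ) (a b : P) :
    Finset (Fin (k + 1) → P) :=
  Finset.univ.filter fun c => StrictMono c ∧ c 0 = a ∧ c (Fin.last k) = b

section

variable {P : Type*} [Fintype P] [PartialOrder P]

theorem mem_strictChains {k : ℕ} {a b : P} {c : Fin (k + 1) → P} :
    c ∈ strictChains k a b ↔ StrictMono c ∧ c 0 = a ∧ c (Fin.last k) = b := by
  simp [strictChains]

theorem zetaPoset_eq_one_add : zetaPoset P = 1 + strictZetaPoset P := by
  ext a b
  by_cases hab : a = b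
  · simp [zetaPoset, strictZetaPoset, hab]
  · simp [zetaPoset, strictZetaPoset, hab, le_iff_lt_or_eq]

/-- Deleting the first point of a chain whose second point is `x`. -/
theorem card_filter_strictChains_succ (k : ℕ) (a b x : P) :
    ((strictChains (k + 1) a b).filter fun c => c 1 = x).card =
      if a < x then (strictChains k x b).card else 0 := by
  split_ifs with hax
  · refine Finset.card_nbij' Fin.tail (fun c => Fin.cons a c) ?_ ?_ ?_ ?_
    · intro c hc
      simp only [Finset.coe_filter, Set.mem_ofPred_eq, mem_strictChains, Finset.mem_coe] at hc ⊢
      exact ⟨hc.1.1.comp Fin.strictMono_succ, hc.2, hc.1.2.2⟩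
    · intro c hc
      simp only [Finset.coe_filter, Set.mem_ofPred_eq, mem_strictChains, Finset.mem_coe] at hc ⊢
      obtain ⟨hc, rfl, hb⟩ := hc
      exact ⟨⟨strictMono_vecCons.2 ⟨hax, hc⟩, rfl, hb⟩, rfl⟩
    · intro c hc
      simp only [Finset.coe_filter, Set.mem_ofPred_eq, mem_strictChains] at hc
      rw [← hc.1.2.1]
      exact Fin.cons_self_tail c
    · intro c _
      exact Fin.tail_cons _ _
  · rw [Finset.card_eq_zero, Finset.filter_eq_empty_iff]
    rintro c hc rfl
    rw [mem_strictChains] at hc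
    exact hax (hc.2.1 ▸ hc.1 Fin.zero_lt_one)

theorem strictZetaPoset_pow_apply (k : ℕ) (a b : P) :
    (strictZetaPoset P ^ k) a b = (strictChains k a b).card := by
  induction k generalizing a with
  | zero =>
    rw [pow_zero, Matrix.one_apply]
    split_ifs with hab
    · subst hab
      symm
      rw [Nat.cast_eq_one, Finset.card_eq_one]
      refine ⟨fun _ => a, Finset.ext fun c => ?_⟩
      rw [mem_strictChains, Finset.mem_singleton]
      constructor
      · rintro ⟨-, h, -⟩
        funext i
        rw [Fin.fin_one_eq_zero i, ← h]
      · rintro rfl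
        exact ⟨Subsingleton.strictMono (α := Fin 1) _, rfl, rfl⟩
    · symm
      rw [Nat.cast_eq_zero, Finset.card_eq_zero, Finset.eq_empty_iff_forall_notMem]
      intro c hc
      rw [mem_strictChains] at hc
      exact hab (hc.2.1.symm.trans hc.2.2)
  | succ k ih =>
    rw [pow_succ', Matrix.mul_apply, Finset.card_eq_sum_card_fiberwise
      (f := fun c : Fin (k + 2) → P => c 1) (t := Finset.univ) (fun _ _ => by simp)]
    push_cast
    refine Finset.sum_congr rfl fun x _ => ?_
    rw [ih, card_filter_strictChains_succ]
    simp [strictZetaPoset]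

theorem strictZetaPoset_pow_card : strictZetaPoset P ^ Fintype.card P = 0 := by
  ext a b
  rw [strictZetaPoset_pow_apply, Matrix.zero_apply, Nat.cast_eq_zero, Finset.card_eq_zero,
    Finset.eq_empty_iff_forall_notMem]
  intro c hc
  have hcard := Fintype.card_le_of_injective c (mem_strictChains.1 hc).1.injective
  simp at hcard

theorem zetaPoset_mul_sum_neg_pow :
    zetaPoset P * ∑ k ∈ Finset.range (Fintype.card P), (-strictZetaPoset P) ^ k = 1 := by
  rw [zetaPoset_eq_one_add, ← sub_neg_eq_add, mul_neg_geom_sum, neg_pow,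
    strictZetaPoset_pow_card, mul_zero, sub_zero]

end

theorem stmt9 {P : Type*} [Fintype P] [PartialOrder P] :
    IsUnit (zetaPoset P).det ∧ ∀ a b : P,
      (zetaPoset P)⁻¹ a b =
        ∑ k ∈ Finset.range (Fintype.card P), (-1 : ℚ) ^ k *
          ((Finset.univ.filter (fun c : Fin (k + 1) → P =>
              StrictMono c ∧ c 0 = a ∧ c (Fin.last k) = b)).card : ℚ) := by
  refine ⟨Matrix.isUnit_det_of_right_inverse zetaPoset_mul_sum_neg_pow, fun a b => ?_⟩
  rw [Matrix.inv_eq_right_inv zetaPoset_mul_sum_neg_pow, Matrix.sum_apply]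
  refine Finset.sum_congr rfl fun k _ => ?_
  change _ = (-1 : ℚ) ^ k * ((strictChains k a b).card : ℚ)
  rw [← strictZetaPoset_pow_apply, ← neg_one_smul ℚ (strictZetaPoset P), smul_pow,
    Matrix.smul_apply, smul_eq_mul]
end

section
/- Let (X,d) be a finite nonempty metric space and for t > 0 let ζ_t : X × X → ℝ be the matrix ζ_t(x,y) = exp(−t·d(x,y)). Then as t → ∞, the sum of the entries of ζ_t⁻¹ tends to the number of points of X: lim_{t→∞} ∑_{x,y ∈ X} ζ_t⁻¹(x,y) = |X| (in particular ζ_t is invertible for all sufficiently large t). -/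
attribute [local instance] Classical.propDecidable

/-- The similarity matrix of a metric space scaled by `t` tends entrywise to the identity matrix
as `t → ∞`. -/
theorem tendsto_exp_neg_mul_dist_atTop {X : Type*} [MetricSpace X] :
    Filter.Tendsto (fun t : ℝ => Matrix.of fun x y : X => Real.exp (-t * dist x y))
      Filter.atTop (nhds (1 : Matrix X X ℝ)) := by
  refine tendsto_pi_nhds.2 fun x => tendsto_pi_nhds.2 fun y => ?_
  rcases eq_or_ne x y with rfl | hxy
  · simp
  · rw [Matrix.one_apply_ne hxy]
    exact Real.tendsto_exp_atBot.comp
      (Filter.tendsto_neg_atTop_atBot.atBot_mul_const (dist_pos.2 hxy))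

theorem stmt13 {X : Type*} [MetricSpace X] [Fintype X] [Nonempty X] :
    (∀ᶠ t : ℝ in Filter.atTop,
        IsUnit (Matrix.of fun x y : X => Real.exp (-t * dist x y)).det) ∧
      Filter.Tendsto
        (fun t : ℝ =>
          ∑ x : X, ∑ y : X, (Matrix.of fun x y : X => Real.exp (-t * dist x y))⁻¹ x y)
        Filter.atTop (nhds (Fintype.card X : ℝ)) := by
  have hζ := tendsto_exp_neg_mul_dist_atTop (X := X)
  constructor
  · have hdet := ((continuous_id.matrix_det (n := X) (R := ℝ)).tendsto 1).comp hζ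
    simp only [id, Matrix.det_one] at hdet
    filter_upwards [hdet.eventually_ne one_ne_zero] with t ht
    exact isUnit_iff_ne_zero.2 ht
  · have hring : ContinuousAt Ring.inverse (1 : Matrix X X ℝ).det := by
      rw [Matrix.det_one, Ring.inverse_eq_inv']
      exact continuousAt_inv₀ one_ne_zero
    have hinv := (continuousAt_matrix_inv (1 : Matrix X X ℝ) hring).tendsto.comp hζ
    rw [inv_one] at hinv
    have hsum : (Fintype.card X : ℝ) = ∑ x : X, ∑ y : X, (1 : Matrix X X ℝ) x y := by
      simp [Matrix.one_apply]
    rw [hsum]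
    exact tendsto_finsetSum _ fun x _ => tendsto_finsetSum _ fun y _ =>
      tendsto_pi_nhds.1 (tendsto_pi_nhds.1 hinv x) y
end

section
/- Let (X,d) be a finite metric space with points enumerated x_1, …, x_n. Then ∑_{σ ∈ Perm(X)} (-1)^{n + c(σ)} · ( ∑_{x ∈ X} d(x, σ(x)) )^{n} = n! · ( C_n + det D ), where D = (d(x_i, x_j))_{i,j} is the distance matrix, C_n = (1/2) ∑_{i ≠ j} det(N_{i,j}) with N_{i,j} the n×n matrix whose l-th column is the all-ones vector if l = i, the vector of squared distances (d(x_j, x_1)², …, d(x_j, x_n)²)ᵀ if l = j, and the vector (d(x_l, x_1), …, d(x_l, x_n))ᵀ otherwise, and c(σ) is the number of orbits of σ on X (cycles including fixed points). -/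
attribute [local instance] Classical.propDecidable

theorem neg_one_pow_card_add_orbitCount {I : Type*} [Fintype I] (σ : Equiv.Perm I) :
    (-1 : ℝ) ^ (Fintype.card I + orbitCount σ) = ((Equiv.Perm.sign σ : ℤ) : ℝ) := by
  have hle : σ.support.card ≤ Fintype.card I := Finset.card_le_univ _
  obtain ⟨m, hm⟩ := Nat.exists_eq_add_of_le hle
  have hexp : Fintype.card I + orbitCount σ
      = (σ.support.card + Multiset.card σ.cycleType) + 2 * m := by
    unfold orbitCount
    omega
  rw [hexp, pow_add, pow_mul, Equiv.Perm.sign_of_cycleType, Equiv.Perm.sum_cycleType]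
  simp

/-- The exponent vector equal to `0` at `i`, to `2` at `j`, and to `1` elsewhere. -/
def zeroTwoExponent {ι : Type*} [DecidableEq ι] (i j : ι) : ι → ℕ :=
  fun l => if l = i then 0 else if l = j then 2 else 1

theorem sum_zeroTwoExponent {ι : Type*} [Fintype ι] [DecidableEq ι] {i j : ι} (h : i ≠ j) :
    ∑ l, zeroTwoExponent i j l = Fintype.card ι := by
  have hpt : ∀ l, zeroTwoExponent i j l + (if l = i then 1 else 0)
      = 1 + (if l = j then 1 else 0) := by
    intro l
    unfold zeroTwoExponent
    split_ifs <;> simp_all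
  have hsum := Finset.sum_congr (rfl : (Finset.univ : Finset ι) = _) fun l _ => hpt l
  simpa [Finset.sum_add_distrib] using hsum

theorem prod_factorial_zeroTwoExponent {ι : Type*} [Fintype ι] [DecidableEq ι] {i j : ι}
    (h : i ≠ j) : ∏ l, (zeroTwoExponent i j l).factorial = 2 := by
  rw [Finset.prod_eq_single j]
  · simp [zeroTwoExponent, h.symm]
  · intro l _ hl
    unfold zeroTwoExponent
    split_ifs <;> simp_all
  · simp

theorem zeroTwoExponent_injOn {ι : Type*} [Fintype ι] [DecidableEq ι] :
    Set.InjOn (fun p : ι × ι => zeroTwoExponent p.1 p.2)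
      (Finset.univ.offDiag : Finset (ι × ι)) := by
  rintro ⟨i, j⟩ hij ⟨i', j'⟩ hij' heq
  have hi := congrFun heq i
  have hj := congrFun heq j
  simp only [zeroTwoExponent] at hi hj
  simp at hij hij'
  grind

/-- An exponent vector of total degree `card ι` with at most one zero entry is constantly `1`
or has a single `0`, a single `2`, and all other entries `1`. -/
theorem eq_one_or_eq_zeroTwoExponent {ι : Type*} [Fintype ι] [DecidableEq ι] {k : ι → ℕ}
    (hk : ∑ l, k l = Fintype.card ι) (hzero : ∀ i j, k i = 0 → k j = 0 → i = j) :
    k = 1 ∨ ∃ i j, i ≠ j ∧ k = zeroTwoExponent i j := by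
  by_cases h : ∃ i, k i = 0
  · right
    obtain ⟨i, hi⟩ := h
    have hj : ∃ j, 2 ≤ k j := by
      by_contra! hlt
      have : ∑ l, k l < ∑ _l : ι, 1 :=
        Finset.sum_lt_sum (fun l _ => Nat.le_of_lt_succ (hlt l))
          ⟨i, Finset.mem_univ i, by omega⟩
      simp [hk] at this
    obtain ⟨j, hj⟩ := hj
    have hij : i ≠ j := by
      rintro rfl
      omega
    refine ⟨i, j, hij, ?_⟩
    have hle : ∀ l ∈ Finset.univ, zeroTwoExponent i j l ≤ k l := by
      intro l _
      have := hzero l i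
      unfold zeroTwoExponent
      grind
    have heq := (Finset.sum_eq_sum_iff_of_le hle).1 ((sum_zeroTwoExponent hij).trans hk.symm)
    exact funext fun l => (heq l (Finset.mem_univ l)).symm
  · left
    push Not at h
    have hle : ∀ l ∈ Finset.univ, 1 ≤ k l := fun l _ => Nat.one_le_iff_ne_zero.2 (h l)
    have heq := (Finset.sum_eq_sum_iff_of_le hle).1 (by simp [hk])
    exact funext fun l => (heq l (Finset.mem_univ l)).symm

/-- The alternating sum of powers of `∑ i, A (σ i) i` as a combination of determinants of
matrices whose columns are entrywise powers of those of `A`. -/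
theorem sum_sign_mul_sum_pow {ι R : Type*} [Fintype ι] [DecidableEq ι] [CommRing R]
    (A : Matrix ι ι R) (m : ℕ) :
    ∑ σ : Equiv.Perm ι, ((Equiv.Perm.sign σ : ℤ) : R) * (∑ i, A (σ i) i) ^ m
      = ∑ k ∈ Finset.piAntidiag Finset.univ m,
          (Nat.multinomial Finset.univ k : R) * (Matrix.of fun r l => A r l ^ k l).det := by
  simp_rw [Finset.sum_pow_eq_sum_piAntidiag, Matrix.det_apply', Finset.mul_sum]
  rw [Finset.sum_comm]
  refine Finset.sum_congr rfl fun k _ => Finset.sum_congr rfl fun σ _ => ?_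
  simp only [Matrix.of_apply]
  ring

/-- Specialization of `sum_sign_mul_sum_pow` to the exponent `card ι`, where all determinants
with two constant columns drop out. -/
theorem sum_sign_mul_sum_pow_card {ι : Type*} [Fintype ι] [DecidableEq ι]
    (A : Matrix ι ι ℝ) :
    ∑ σ : Equiv.Perm ι, ((Equiv.Perm.sign σ : ℤ) : ℝ) * (∑ i, A (σ i) i) ^ Fintype.card ι
      = (Fintype.card ι).factorial * ((1 / 2) * (∑ i, ∑ j ∈ Finset.univ.erase i,
          (Matrix.of fun r l => A r l ^ zeroTwoExponent i j l).det) + A.det) := by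
  rw [sum_sign_mul_sum_pow]
  set S : Finset (ι → ℕ) :=
    Finset.univ.offDiag.image fun p : ι × ι => zeroTwoExponent p.1 p.2 with hS
  have hone : (1 : ι → ℕ) ∉ S := by
    simp only [hS, Finset.mem_image, not_exists, not_and]
    intro p _ hp
    have := congrFun hp p.1
    simp [zeroTwoExponent] at this
  have hsub : insert 1 S ⊆ Finset.piAntidiag Finset.univ (Fintype.card ι) := by
    intro k hk
    rw [Finset.mem_insert, hS, Finset.mem_image] at hk
    rw [Finset.mem_piAntidiag]
    refine ⟨?_, fun l _ => Finset.mem_univ l⟩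
    rcases hk with rfl | ⟨p, hp, rfl⟩
    · simp
    · exact sum_zeroTwoExponent (by simpa using hp)
  rw [← Finset.sum_subset hsub, Finset.sum_insert hone, hS,
    Finset.sum_image zeroTwoExponent_injOn]
  · have hmult : (Nat.multinomial Finset.univ (1 : ι → ℕ) : ℝ) = (Fintype.card ι).factorial := by
      have := Nat.multinomial_spec Finset.univ (1 : ι → ℕ)
      simp at this
      exact_mod_cast this
    have hmult' : ∀ p ∈ (Finset.univ : Finset ι).offDiag,
        (Nat.multinomial Finset.univ (zeroTwoExponent p.1 p.2) : ℝ)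
            * (Matrix.of fun r l => A r l ^ zeroTwoExponent p.1 p.2 l).det
          = (Fintype.card ι).factorial * (1 / 2)
            * (Matrix.of fun r l => A r l ^ zeroTwoExponent p.1 p.2 l).det := by
      intro p hp
      have hne : p.1 ≠ p.2 := by simpa using hp
      have hspec := Nat.multinomial_spec Finset.univ (zeroTwoExponent p.1 p.2)
      rw [prod_factorial_zeroTwoExponent hne, sum_zeroTwoExponent hne] at hspec
      rw [← hspec]
      push_cast
      ring
    have hdet : (Matrix.of fun r l => A r l ^ (1 : ι → ℕ) l) = A := by
      ext
      simp
    rw [Finset.sum_congr rfl hmult', hmult, hdet, ← Finset.mul_sum,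
      Finset.sum_finset_product' _ Finset.univ (fun i => Finset.univ.erase i)
        (f := fun i j => (Matrix.of fun r l => A r l ^ zeroTwoExponent i j l).det)]
    · ring
    · rintro ⟨i, j⟩
      simp [eq_comm]
  · intro k hk hkS
    rw [Finset.mem_piAntidiag] at hk
    have hzero : ∃ i j, k i = 0 ∧ k j = 0 ∧ i ≠ j := by
      by_contra! hcon
      refine hkS (Finset.mem_insert.2 ?_)
      refine (eq_one_or_eq_zeroTwoExponent hk.1 hcon).imp_right ?_
      rintro ⟨i, j, hij, rfl⟩
      exact Finset.mem_image.2 ⟨(i, j), by simpa using hij, rfl⟩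
    obtain ⟨i, j, hi, hj, hij⟩ := hzero
    rw [Matrix.det_zero_of_column_eq hij (by simp [hi, hj]), mul_zero]

theorem stmt18 {X : Type*} [MetricSpace X] [Fintype X] (n : ℕ) (e : Fin n ≃ X) :
    ∑ σ : Equiv.Perm X,
        (-1 : ℝ) ^ (n + orbitCount σ) * (∑ x : X, dist x (σ x)) ^ n =
      (Nat.factorial n : ℝ) *
        ((1 / 2 : ℝ) *
            (∑ i : Fin n, ∑ j ∈ Finset.univ.erase i,
              (Matrix.of fun r l : Fin n =>
                if l = i then (1 : ℝ)
                else if l = j then dist (e j) (e r) ^ 2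
                else dist (e l) (e r)).det) +
          (Matrix.of fun i j : Fin n => dist (e i) (e j)).det) := by
  have hcard : Fintype.card (Fin n) = n := Fintype.card_fin n
  have hcardX : Fintype.card X = n := by rw [← Fintype.card_congr e, hcard]
  have key := sum_sign_mul_sum_pow_card (Matrix.of fun r l : Fin n => dist (e l) (e r))
  rw [hcard] at key
  convert key using 1
  · refine (Fintype.sum_equiv e.permCongr _ _ fun τ => ?_).symm
    have hsign := neg_one_pow_card_add_orbitCount (e.permCongr τ)
    rw [hcardX] at hsign
    rw [hsign, ← Equiv.sum_comp e]
    congr 1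
    · congr 2
      convert (Equiv.Perm.sign_permCongr e τ).symm
    · simp [Equiv.permCongr_apply]
  · congr 3
    · refine Finset.sum_congr rfl fun i _ => Finset.sum_congr (by congr!) fun j _ => ?_
      congr 1
      ext r l
      simp only [Matrix.of_apply, zeroTwoExponent]
      split_ifs <;> simp_all
    · ext r l
      simp [dist_comm]
end
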